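/- Let R be a φ-ring. Then R is nonnil-coherent if and only if for every pair of injective cogenerators E_1, E_2 and every φ-flat R-module M, the R-module Hom_R(Hom_R(M,E_1),E_2) is φ-flat. -/

import Mathlib

open CategoryTheory

universe u

/-- A commutative ring is a `φ`-ring if its nilradical is a divided prime ideal. -/
def IsPhiRing (R : Type u) [CommRing R] : Prop :=
  (nilradical R).IsPrime ∧ ∀ x : R, x ∉ nilradical R → nilradical R ≤ Ideal.span {x}

/-- A ring is nonnil-coherent if every finitely generated nonnil ideal is
finitely presented as a module. -/
def IsNonnilCoherent (R : Type u) [CommRing R] : Prop :=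
  ∀ I : Ideal R, I.FG → ¬ I ≤ nilradical R → Module.FinitePresentation R I

/-- A module is φ-torsion if every element is annihilated by a nonnil ideal. -/
def IsPhiTorsion (R : Type u) [CommRing R] (T : Type u) [AddCommGroup T] [Module R T] : Prop :=
  ∀ t : T, ∃ I : Ideal R, ¬ I ≤ nilradical R ∧ ∀ a ∈ I, a • t = 0

/-- A module `M` is φ-flat if `Tor₁ᴿ(T, M) = 0` for every φ-torsion module `T`. -/
def IsPhiFlat (R : Type u) [CommRing R] (M : Type u) [AddCommGroup M] [Module R M] : Prop :=
  ∀ (T : Type u) [AddCommGroup T] [Module R T], IsPhiTorsion R T →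
    Subsingleton (((Tor (ModuleCat.{u} R) 1).obj (ModuleCat.of R T)).obj (ModuleCat.of R M))

/-- A module `M` is nonnil-injective if `Ext¹ᴿ(T, M) = 0` for every φ-torsion module `T`. -/
def IsNonnilInjective (R : Type u) [CommRing R] (M : Type u) [AddCommGroup M] [Module R M] :
    Prop :=
  ∀ (T : Type u) [AddCommGroup T] [Module R T], IsPhiTorsion R T →
    Subsingleton (((Ext R (ModuleCat.{u} R) 1).obj (Opposite.op (ModuleCat.of R T))).obj
      (ModuleCat.of R M))

/-- A module `M` is nonnil-FP-injective if `Ext¹ᴿ(T, M) = 0` for every finitely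
presented φ-torsion module `T`. -/
def IsNonnilFPInjective (R : Type u) [CommRing R] (M : Type u) [AddCommGroup M] [Module R M] :
    Prop :=
  ∀ (T : Type u) [AddCommGroup T] [Module R T], Module.FinitePresentation R T →
    IsPhiTorsion R T →
    Subsingleton (((Ext R (ModuleCat.{u} R) 1).obj (Opposite.op (ModuleCat.of R T))).obj
      (ModuleCat.of R M))

/-- An injective cogenerator of the category of `R`-modules. -/
def IsInjectiveCogenerator (R : Type u) [CommRing R] (E : Type u) [AddCommGroup E]
    [Module R E] : Prop :=
  Module.Injective R E ∧
    ∀ (M : Type u) [AddCommGroup M] [Module R M], (∀ f : M →ₗ[R] E, f = 0) → Subsingleton M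

/-!
By dévissage of free modules, `M` is φ-flat if and only if `I ⊗ M → M` is injective for every
finitely generated nonnil ideal `I`. Injectivity of `I ⊗ Hom(N, E) → Hom(N, E)` amounts to that of
the natural map `I ⊗ Hom(N, E) → Hom(Hom(I, N), E)`. For injective `E` this map is injective as soon
as `I` is finitely presented. Conversely, as in Chase's theorem on products of flat modules, for an
injective cogenerator `E` its injectivity for all powers `N = Eᴶ`, which are the duals of the
free modules, forces a finitely generated `I` to be finitely presented.
-/

open scoped TensorProduct

section Tor

variable {R : Type u} [CommRing R]

lemma exact_lTensor_iff_injective_lTensor_range {A B C : Type*} [AddCommGroup A] [Module R A]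
    [AddCommGroup B] [Module R B] [AddCommGroup C] [Module R C] (T : Type*) [AddCommGroup T]
    [Module R T] {f : A →ₗ[R] B} {g : B →ₗ[R] C} (hfg : Function.Exact f g) :
    Function.Exact (f.lTensor T) (g.lTensor T) ↔
      Function.Injective ((LinearMap.range g).subtype.lTensor T) := by
  have hexact : Function.Exact (f.lTensor T) (g.rangeRestrict.lTensor T) :=
    lTensor_exact T (fun b => Subtype.ext_iff.trans (hfg b)) g.surjective_rangeRestrict
  have hcomp : g.lTensor T =
      (LinearMap.range g).subtype.lTensor T ∘ₗ g.rangeRestrict.lTensor T := by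
    rw [← LinearMap.lTensor_comp]
    rfl
  rw [hcomp]
  refine ⟨fun h => (injective_iff_map_eq_zero _).2 fun z hz => ?_, fun h z => ?_⟩
  · obtain ⟨w, rfl⟩ := LinearMap.lTensor_surjective T g.surjective_rangeRestrict z
    exact (hexact w).2 ((h w).1 hz)
  · rw [← hexact z, LinearMap.comp_apply, map_eq_zero_iff _ h]

lemma subsingleton_tor_one_iff_exact_lTensor {M : Type u} [AddCommGroup M] [Module R M]
    (P : ProjectiveResolution (ModuleCat.of R M)) (T : Type u) [AddCommGroup T] [Module R T] :
    Subsingleton (((Tor (ModuleCat.{u} R) 1).obj (ModuleCat.of R T)).obj (ModuleCat.of R M)) ↔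
      Function.Exact ((P.complex.d 2 1).hom.lTensor T) ((P.complex.d 1 0).hom.lTensor T) := by
  have torIso := P.isoLeftDerivedObj
    ((MonoidalCategory.tensoringLeft (ModuleCat R)).obj (ModuleCat.of R T)) 1
  rw [← ModuleCat.isZero_iff_subsingleton]
  refine torIso.isZero_iff.trans
    ((HomologicalComplex.exactAt_iff_isZero_homology _ _).symm.trans ?_)
  rw [HomologicalComplex.exactAt_iff' _ 2 1 0 (by simp) (by simp)]
  exact ShortComplex.ShortExact.moduleCat_exact_iff_function_exact _

/-- Mathlib's `Tor` resolves the second argument; this computes it from the first. -/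
theorem subsingleton_tor_one_iff_injective_rTensor {L F : Type*} {T : Type u} (M : Type u)
    [AddCommGroup L] [Module R L] [AddCommGroup F] [Module R F] [Module.Flat R F]
    [AddCommGroup T] [Module R T] [AddCommGroup M] [Module R M] {f : L →ₗ[R] F} {g : F →ₗ[R] T}
    (hf : Function.Injective f) (hfg : Function.Exact f g) (hg : Function.Surjective g) :
    Subsingleton (((Tor (ModuleCat.{u} R) 1).obj (ModuleCat.of R T)).obj (ModuleCat.of R M)) ↔
      Function.Injective (f.rTensor M) := by
  let P := ProjectiveResolution.of (ModuleCat.of R M)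
  let d : P.complex.X 1 →ₗ[R] P.complex.X 0 := (P.complex.d 1 0).hom
  let π : P.complex.X 0 →ₗ[R] M := (P.π.f 0).hom
  have hproj : Module.Projective R (P.complex.X 0) :=
    (IsProjective.iff_projective _).2 (P.projective 0)
  have hπ : Function.Surjective π :=
    (ModuleCat.epi_iff_surjective _).1 (inferInstanceAs (Epi (P.π.f 0)))
  have hdd : Function.Exact (P.complex.d 2 1).hom d :=
    (ShortComplex.ShortExact.moduleCat_exact_iff_function_exact _).1 (P.exact_succ 0)
  have hdπ : Function.Exact (LinearMap.range d).subtype π := by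
    rw [LinearMap.exact_iff, Submodule.range_subtype]
    exact ((ShortComplex.moduleCat_exact_iff_range_eq_ker _).1 P.exact₀).symm
  rw [subsingleton_tor_one_iff_exact_lTensor P, exact_lTensor_iff_injective_lTensor_range T hdd]
  constructor <;> intro h
  · rw [LinearMap.lTensor_inj_iff_rTensor_inj] at h
    rw [← LinearMap.lTensor_inj_iff_rTensor_inj]
    exact lTensor_injective_of_exact_of_exact_of_rTensor_injective hdπ hπ hfg hg h
      (Module.Flat.lTensor_preserves_injective_linearMap f hf)
  · exact lTensor_injective_of_exact_of_exact_of_rTensor_injective hfg hg hdπ hπ h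
      (Module.Flat.lTensor_preserves_injective_linearMap _ (Submodule.subtype_injective _))

end Tor

section Devissage

variable {R M : Type*} [CommRing R] [AddCommGroup M] [Module R M]

lemma rTensor_comp_inl_injective {A B C D : Type*} [AddCommGroup A] [Module R A]
    [AddCommGroup B] [Module R B] [AddCommGroup C] [Module R C] [AddCommGroup D] [Module R D]
    {a : A →ₗ[R] B × C} {b : B × C →ₗ[R] D} (hab : Function.Exact a b)
    (hb : Function.Surjective b)
    (h : Function.Injective ((LinearMap.snd R B C ∘ₗ a).rTensor M)) :
    Function.Injective ((b ∘ₗ LinearMap.inl R B C).rTensor M) := by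
  rw [injective_iff_map_eq_zero] at h ⊢
  intro z hz
  rw [LinearMap.rTensor_comp_apply] at hz
  obtain ⟨w, hw⟩ := (rTensor_exact M hab hb _).1 hz
  have hw₀ : w = 0 := h w <| by
    rw [LinearMap.rTensor_comp_apply, hw, ← LinearMap.rTensor_comp_apply, LinearMap.snd_comp_inl,
      LinearMap.rTensor_zero, LinearMap.zero_apply]
  rw [hw₀, map_zero] at hw
  rw [← LinearMap.rTensor_id_apply M B z, ← LinearMap.fst_comp_inl R B C,
    LinearMap.rTensor_comp_apply, ← hw, map_zero]

variable {F : Type*} [AddCommGroup F] [Module R F] {L : Submodule R F}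

lemma rTensor_inclusion_sup_span_injective (x : F)
    (h : Function.Injective ((L.comap (LinearMap.toSpanSingleton R F x)).subtype.rTensor M)) :
    Function.Injective ((Submodule.inclusion (le_sup_left : L ≤ L ⊔ R ∙ x)).rTensor M) := by
  let I : Ideal R := L.comap (LinearMap.toSpanSingleton R F x)
  let a : I →ₗ[R] L × R :=
    (-(LinearMap.toSpanSingleton R F x).restrict fun _ hr => hr).prod I.subtype
  have hx : x ∈ L ⊔ R ∙ x := Submodule.mem_sup_right (Submodule.mem_span_singleton_self x)
  let b : L × R →ₗ[R] ↥(L ⊔ R ∙ x) :=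
    (Submodule.inclusion le_sup_left).coprod (LinearMap.toSpanSingleton R _ ⟨x, hx⟩)
  have hb : Function.Surjective b := by
    rintro ⟨y, hy⟩
    obtain ⟨l, hl, _, hr, rfl⟩ := Submodule.mem_sup.1 hy
    obtain ⟨r, rfl⟩ := Submodule.mem_span_singleton.1 hr
    exact ⟨(⟨l, hl⟩, r), rfl⟩
  have hab : Function.Exact a b := by
    rintro ⟨l, r⟩
    have hb_eq_zero : b (l, r) = 0 ↔ -(r • x) = l := by
      rw [neg_eq_iff_add_eq_zero, add_comm]
      exact Subtype.ext_iff
    rw [hb_eq_zero]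
    constructor
    · intro hl
      have hr : r • x ∈ L := neg_mem_iff.1 (hl ▸ l.2)
      exact ⟨⟨r, hr⟩, Prod.ext (Subtype.ext hl) rfl⟩
    · rintro ⟨i, hi⟩
      obtain ⟨rfl, rfl⟩ := Prod.mk.inj hi
      rfl
  have hinl : b ∘ₗ LinearMap.inl R L R = Submodule.inclusion le_sup_left :=
    LinearMap.coprod_inl _ _
  rw [← hinl]
  exact rTensor_comp_inl_injective hab hb h

lemma rTensor_inclusion_sup_injective {N : Submodule R F} (hN : N.FG)
    (h : ∀ (x : F) (I : Ideal R), L.comap (LinearMap.toSpanSingleton R F x) ≤ I →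
      Function.Injective (I.subtype.rTensor M)) :
    Function.Injective ((Submodule.inclusion (le_sup_left : L ≤ L ⊔ N)).rTensor M) := by
  suffices ∀ hL : L ≤ L ⊔ N, Function.Injective ((Submodule.inclusion hL).rTensor M) from this _
  induction N, hN using Submodule.fg_sup_span_induction with
  | bot =>
    rw [sup_bot_eq]
    intro hL
    have : Submodule.inclusion hL = LinearMap.id := rfl
    rw [this, LinearMap.rTensor_id]
    exact Function.injective_id
  | sup N x _ ih =>
    rw [← sup_assoc]
    intro hL
    have hx := rTensor_inclusion_sup_span_injective (L := L ⊔ N) (M := M) x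
      (h x _ (Submodule.comap_mono le_sup_left))
    have hcomp : Submodule.inclusion hL =
      Submodule.inclusion le_sup_left ∘ₗ Submodule.inclusion (le_sup_left : L ≤ L ⊔ N) := rfl
    rw [hcomp, LinearMap.rTensor_comp]
    exact hx.comp (ih le_sup_left)

theorem rTensor_subtype_injective_of_comap_toSpanSingleton_le
    (h : ∀ (x : F) (I : Ideal R), L.comap (LinearMap.toSpanSingleton R F x) ≤ I →
      Function.Injective (I.subtype.rTensor M)) :
    Function.Injective (L.subtype.rTensor M) := by
  rw [injective_iff_map_eq_zero]
  intro z hz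
  obtain ⟨J, hJ, hJL, y, rfl⟩ := Submodule.exists_fg_le_eq_rTensor_inclusion z
  rw [← LinearMap.rTensor_comp_apply, Submodule.subtype_comp_inclusion] at hz
  obtain ⟨N, hJN, hN, hy⟩ := TensorProduct.eq_zero_of_fg_of_subtype_eq_zero hJ hz
  apply (injective_iff_map_eq_zero _).1 (rTensor_inclusion_sup_injective hN h)
  have hcomp : Submodule.inclusion (le_sup_left : L ≤ L ⊔ N) ∘ₗ Submodule.inclusion hJL =
    Submodule.inclusion le_sup_right ∘ₗ Submodule.inclusion hJN := rfl
  rw [← LinearMap.rTensor_comp_apply, hcomp, LinearMap.rTensor_comp_apply, hy, map_zero]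

end Devissage

section PhiFlat

variable {R : Type u} [CommRing R]

lemma isPhiTorsion_quotient {I : Ideal R} (hI : ¬ I ≤ nilradical R) : IsPhiTorsion R (R ⧸ I) := by
  intro t
  obtain ⟨r, rfl⟩ := I.mkQ_surjective t
  refine ⟨I, hI, fun a ha => ?_⟩
  rw [← map_smul, Submodule.mkQ_apply, Submodule.Quotient.mk_eq_zero]
  exact I.mul_mem_right r ha

lemma rTensor_subtype_injective_of_fg_nonnil {M : Type*} [AddCommGroup M] [Module R M]
    (h : ∀ I : Ideal R, I.FG → ¬ I ≤ nilradical R → Function.Injective (I.subtype.rTensor M))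
    {I : Ideal R} (hI : ¬ I ≤ nilradical R) : Function.Injective (I.subtype.rTensor M) := by
  rw [injective_iff_map_eq_zero]
  intro z hz
  obtain ⟨s, hsI, hs⟩ := SetLike.not_le_iff_exists.1 hI
  obtain ⟨J, hJ, hJI, y, rfl⟩ := Submodule.exists_fg_le_eq_rTensor_inclusion z
  have hle : J ⊔ Ideal.span {s} ≤ I := sup_le hJI ((Ideal.span_singleton_le_iff_mem I).2 hsI)
  have hnonnil : ¬ J ⊔ Ideal.span {s} ≤ nilradical R := fun hnil =>
    hs (hnil (le_sup_right (a := J) (Ideal.mem_span_singleton_self s)))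
  have hy : (Submodule.inclusion (le_sup_left : J ≤ J ⊔ Ideal.span {s})).rTensor M y = 0 := by
    apply (injective_iff_map_eq_zero _).1
      (h _ (hJ.sup (Submodule.fg_span_singleton s)) hnonnil)
    rwa [← LinearMap.rTensor_comp_apply] at hz ⊢
  have hcomp : Submodule.inclusion hJI =
    Submodule.inclusion hle ∘ₗ Submodule.inclusion le_sup_left := rfl
  rw [hcomp, LinearMap.rTensor_comp_apply, hy, map_zero]

variable {M : Type u} [AddCommGroup M] [Module R M]

theorem isPhiFlat_iff_rTensor_injective :
    IsPhiFlat R M ↔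
      ∀ I : Ideal R, I.FG → ¬ I ≤ nilradical R → Function.Injective (I.subtype.rTensor M) := by
  refine ⟨fun h I _ hI => ?_, fun h T _ _ hT => ?_⟩
  · exact (subsingleton_tor_one_iff_injective_rTensor M I.subtype_injective
      (LinearMap.exact_subtype_mkQ I) I.mkQ_surjective).1 (h (R ⧸ I) (isPhiTorsion_quotient hI))
  · let g : (T →₀ R) →ₗ[R] T := Finsupp.linearCombination R id
    have hg : Function.Surjective g := Finsupp.linearCombination_id_surjective R T
    let ι : LinearMap.ker g →ₗ[R] T →₀ R := (LinearMap.ker g).subtype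
    have hιg : Function.Exact ι g := LinearMap.exact_subtype_ker_map g
    rw [subsingleton_tor_one_iff_injective_rTensor M (Submodule.subtype_injective _) hιg hg]
    refine rTensor_subtype_injective_of_comap_toSpanSingleton_le fun x I hI =>
      rTensor_subtype_injective_of_fg_nonnil h fun hnil => ?_
    obtain ⟨J, hJ, hJx⟩ := hT (g x)
    exact hJ fun a ha => hnil (hI (by simpa using hJx a ha))

lemma IsPhiFlat.of_flat [Module.Flat R M] : IsPhiFlat R M :=
  isPhiFlat_iff_rTensor_injective.2 fun I _ _ =>
    Module.Flat.rTensor_preserves_injective_linearMap _ I.subtype_injective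

lemma IsPhiFlat.of_linearEquiv {M' : Type u} [AddCommGroup M'] [Module R M'] (e : M ≃ₗ[R] M')
    (h : IsPhiFlat R M) : IsPhiFlat R M' := fun T _ _ hT =>
  have := h T hT
  (((Tor (ModuleCat.{u} R) 1).obj (ModuleCat.of R T)).mapIso
    e.symm.toModuleIso).toLinearEquiv.toEquiv.subsingleton

end PhiFlat

section HomEvaluation

universe w

variable (R : Type u) [CommRing R]

/-- The natural map `X ⊗ Hom(N, E) → Hom(Hom(X, N), E)` sending `x ⊗ g` to `h ↦ g (h x)`. For `E`
injective it detects whether a finite module `X` is finitely presented. -/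
def homEvaluation (X N E : Type*) [AddCommGroup X] [Module R X] [AddCommGroup N] [Module R N]
    [AddCommGroup E] [Module R E] : X ⊗[R] (N →ₗ[R] E) →ₗ[R] (X →ₗ[R] N) →ₗ[R] E :=
  TensorProduct.lift ((LinearMap.llcomp R (X →ₗ[R] N) N E).flip ∘ₗ LinearMap.applyₗ)

variable {R} {X Y N : Type*} [AddCommGroup X] [Module R X] [AddCommGroup Y] [Module R Y]
  [AddCommGroup N] [Module R N]

section

variable {E : Type*} [AddCommGroup E] [Module R E]

@[simp]
lemma homEvaluation_tmul (x : X) (g : N →ₗ[R] E) (h : X →ₗ[R] N) :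
    homEvaluation R X N E (x ⊗ₜ g) h = g (h x) := rfl

lemma homEvaluation_rTensor (f : X →ₗ[R] Y) (z : X ⊗[R] (N →ₗ[R] E)) (h : Y →ₗ[R] N) :
    homEvaluation R Y N E (f.rTensor _ z) h = homEvaluation R X N E z (h ∘ₗ f) := by
  induction z with
  | zero => simp only [map_zero, LinearMap.zero_apply]
  | tmul x g => rfl
  | add z w hz hw => simp only [map_add, LinearMap.add_apply, hz, hw]

lemma homEvaluation_bijective [Module.Free R X] [Module.Finite R X] :
    Function.Bijective (homEvaluation R X N E) := by
  let b := Module.Free.chooseBasis R X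
  let inv : ((X →ₗ[R] N) →ₗ[R] E) →ₗ[R] X ⊗[R] (N →ₗ[R] E) :=
    ∑ i, TensorProduct.mk R X _ (b i) ∘ₗ (LinearMap.smulRightₗ (b.coord i)).lcomp R E
  have hinv (Φ) : inv Φ = ∑ i, b i ⊗ₜ (Φ ∘ₗ LinearMap.smulRightₗ (b.coord i)) := by
    simp only [inv, LinearMap.sum_apply]
    rfl
  have hleft : inv ∘ₗ homEvaluation R X N E = LinearMap.id := by
    refine TensorProduct.ext' fun x g => ?_
    have hg (i) : homEvaluation R X N E (x ⊗ₜ g) ∘ₗ LinearMap.smulRightₗ (b.coord i) =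
        b.repr x i • g := by
      ext n
      simp
    simp only [LinearMap.comp_apply, hinv, hg, ← TensorProduct.smul_tmul,
      ← TensorProduct.sum_tmul, b.sum_repr, LinearMap.id_apply]
  have hright (Φ) : homEvaluation R X N E (inv Φ) = Φ := by
    ext h
    have hh : ∑ i, (b.coord i).smulRight (h (b i)) = h := by
      refine b.ext fun j => ?_
      simp [Finsupp.single_apply]
    conv_rhs => rw [← hh, map_sum]
    simp [hinv]
  exact Function.bijective_iff_has_inverse.2 ⟨inv, LinearMap.congr_fun hleft, hright⟩

lemma homEvaluation_injective_of_rTensor_injective [Module.Free R Y] [Module.Finite R Y]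
    {f : X →ₗ[R] Y} (hf : Function.Injective (f.rTensor (N →ₗ[R] E))) :
    Function.Injective (homEvaluation R X N E) := by
  rw [injective_iff_map_eq_zero]
  intro z hz
  apply (injective_iff_map_eq_zero _).1 hf
  apply (injective_iff_map_eq_zero _).1 (homEvaluation_bijective (N := N) (E := E)).1
  ext h
  rw [homEvaluation_rTensor, hz, LinearMap.zero_apply, LinearMap.zero_apply]

end

section Injective

variable {E : Type w} [AddCommGroup E] [Module R E] [Small.{w} R] [Module.Injective R E]

lemma exists_comp_eq_of_ker_le_ker {A B : Type*} [AddCommGroup A] [Module R A] [AddCommGroup B]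
    [Module R B] (κ : A →ₗ[R] B) (ψ : A →ₗ[R] E) (h : LinearMap.ker κ ≤ LinearMap.ker ψ) :
    ∃ φ : B →ₗ[R] E, φ ∘ₗ κ = ψ := by
  have hinj : Function.Injective ((LinearMap.ker κ).liftQ κ le_rfl) :=
    LinearMap.ker_eq_bot.1 (Submodule.ker_liftQ_eq_bot' _ _ rfl)
  obtain ⟨φ, hφ⟩ := Module.Injective.extension_property R E _ _ _ hinj
    ((LinearMap.ker κ).liftQ ψ h)
  exact ⟨φ, LinearMap.ext fun a => LinearMap.congr_fun hφ ((LinearMap.ker κ).mkQ a)⟩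

lemma homEvaluation_surjective [Module.Finite R X] :
    Function.Surjective (homEvaluation R X N E) := by
  intro Φ
  obtain ⟨n, f, hf⟩ := Module.Finite.exists_fin' R X
  obtain ⟨Φ', hΦ'⟩ := Module.Injective.extension_property R E _ _ _
    (LinearMap.lcomp_injective_of_surjective (S := R) (N := N) f hf) Φ
  obtain ⟨w, rfl⟩ := homEvaluation_bijective.2 Φ'
  refine ⟨f.rTensor _ w, LinearMap.ext fun h => ?_⟩
  rw [homEvaluation_rTensor, ← hΦ']
  rfl

theorem homEvaluation_injective [Module.FinitePresentation R X] :
    Function.Injective (homEvaluation R X N E) := by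
  rw [injective_iff_map_eq_zero]
  intro z hz
  obtain ⟨n, f, hf⟩ := Module.Finite.exists_fin' R X
  obtain ⟨w, rfl⟩ := LinearMap.rTensor_surjective _ hf z
  let ι := (LinearMap.ker f).subtype
  have hιf : Function.Exact ι f := LinearMap.exact_subtype_ker_map f
  have : Module.Finite R (LinearMap.ker f) :=
    Module.Finite.iff_fg.2 (Module.FinitePresentation.fg_ker f hf)
  have hker : LinearMap.ker (ι.lcomp R N) ≤ LinearMap.ker (homEvaluation R _ N E w) := by
    intro h hh
    obtain ⟨h, rfl⟩ := (LinearMap.exact_lcomp_of_exact_of_surjective N hιf hf h).1 hh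
    rw [LinearMap.mem_ker, LinearMap.lcomp_apply', ← homEvaluation_rTensor, hz,
      LinearMap.zero_apply]
  obtain ⟨φ, hφ⟩ := exists_comp_eq_of_ker_le_ker _ _ hker
  obtain ⟨u, rfl⟩ := homEvaluation_surjective φ
  have hu : ι.rTensor _ u = w := by
    refine homEvaluation_bijective.1 (LinearMap.ext fun h => ?_)
    rw [homEvaluation_rTensor, ← hφ]
    rfl
  rw [← hu]
  exact (rTensor_exact _ hιf hf).apply_apply_eq_zero u

lemma lcomp_surjective_of_rTensor_injective {M : Type*} [AddCommGroup M] [Module R M]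
    {f : X →ₗ[R] Y} (hf : Function.Injective (f.rTensor M)) :
    Function.Surjective (f.lcomp R (M →ₗ[R] E)) := by
  intro h
  obtain ⟨H, hH⟩ := Module.Injective.extension_property R E _ _ _ hf (TensorProduct.lift h)
  refine ⟨TensorProduct.curry H, LinearMap.ext₂ fun x m => ?_⟩
  exact LinearMap.congr_fun hH (x ⊗ₜ m)

lemma exists_comp_single_eq {ι : Type*} [DecidableEq ι] {V : ι → Type*}
    [∀ i, AddCommGroup (V i)] [∀ i, Module R (V i)] (φ : ∀ i, V i →ₗ[R] E) :
    ∃ Φ : (∀ i, V i) →ₗ[R] E, ∀ i, Φ ∘ₗ LinearMap.single R V i = φ i := by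
  obtain ⟨Φ, hΦ⟩ := Module.Injective.extension_property R E _ _ (DFinsupp.coeFnLinearMap R)
    DFunLike.coe_injective (DFinsupp.lsum R φ)
  refine ⟨Φ, fun i => LinearMap.ext fun v => ?_⟩
  simpa [DFinsupp.single_eq_pi_single] using LinearMap.congr_fun hΦ (DFinsupp.single i v)

lemma exists_apply_single_comp_eq_apply (K : Type*) [DecidableEq K] [AddCommGroup K]
    [Module R K] :
    ∃ Φ : (K →ₗ[R] K → E) →ₗ[R] E, ∀ (k : K) (g : K →ₗ[R] E),
      Φ (LinearMap.single R (fun _ => E) k ∘ₗ g) = g k := by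
  obtain ⟨Φ, hΦ⟩ := exists_comp_single_eq fun k : K => (LinearMap.applyₗ k : (K →ₗ[R] E) →ₗ[R] E)
  refine ⟨Φ ∘ₗ LinearMap.pi fun k => LinearMap.llcomp R K (K → E) E (LinearMap.proj k),
    fun k g => ?_⟩
  refine Eq.trans (congrArg Φ ?_) (LinearMap.congr_fun (hΦ k) g)
  ext i x
  rcases eq_or_ne i k with rfl | hik
  · simp
  · simp [hik]

end Injective

theorem rTensor_doubleDual_injective {E₁ E₂ : Type w} [AddCommGroup E₁] [Module R E₁]
    [AddCommGroup E₂] [Module R E₂] [Small.{w} R] [Module.Injective R E₁] [Module.Injective R E₂]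
    {M : Type*} [AddCommGroup M] [Module R M] [Module.FinitePresentation R X] {f : X →ₗ[R] Y}
    (hf : Function.Injective (f.rTensor M)) :
    Function.Injective (f.rTensor ((M →ₗ[R] E₁) →ₗ[R] E₂)) := by
  rw [injective_iff_map_eq_zero]
  intro z hz
  refine (injective_iff_map_eq_zero _).1 homEvaluation_injective z (LinearMap.ext fun h => ?_)
  obtain ⟨h, rfl⟩ := lcomp_surjective_of_rTensor_injective hf h
  rw [LinearMap.lcomp_apply', ← homEvaluation_rTensor, hz, map_zero, LinearMap.zero_apply,
    LinearMap.zero_apply]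

end HomEvaluation

section Cogenerator

variable {R : Type u} [CommRing R] {E : Type u} [AddCommGroup E] [Module R E]

lemma IsInjectiveCogenerator.eq_zero_of_forall_apply_eq_zero (hE : IsInjectiveCogenerator R E)
    {V : Type u} [AddCommGroup V] [Module R V] {v : V} (hv : ∀ g : V →ₗ[R] E, g v = 0) :
    v = 0 := by
  have := hE.1
  rw [← Submodule.span_singleton_eq_bot (R := R), ← Submodule.subsingleton_iff_eq_bot]
  refine hE.2 _ fun g => ?_
  obtain ⟨g, rfl⟩ := Module.Injective.extension_property R E _ _ _
    (R ∙ v).subtype_injective g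
  ext ⟨x, hx⟩
  obtain ⟨r, rfl⟩ := Submodule.mem_span_singleton.1 hx
  simp only [LinearMap.comp_apply, Submodule.subtype_apply, map_smul, hv, smul_zero,
    LinearMap.zero_apply]

lemma IsInjectiveCogenerator.mem_of_forall_le_ker (hE : IsInjectiveCogenerator R E)
    {V : Type u} [AddCommGroup V] [Module R V] {W : Submodule R V} {v : V}
    (hv : ∀ g : V →ₗ[R] E, W ≤ LinearMap.ker g → g v = 0) : v ∈ W := by
  rw [← Submodule.Quotient.mk_eq_zero]
  refine hE.eq_zero_of_forall_apply_eq_zero fun g => hv (g ∘ₗ W.mkQ) fun x hx => ?_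
  rw [LinearMap.mem_ker, LinearMap.comp_apply, Submodule.mkQ_apply,
    (Submodule.Quotient.mk_eq_zero W).2 hx, map_zero]

lemma isInjectiveCogenerator_characterModule :
    IsInjectiveCogenerator R (CharacterModule R) := by
  refine ⟨Module.Flat.iff_characterModule_injective.1 inferInstance, fun V _ _ h => ?_⟩
  refine subsingleton_of_forall_eq 0 fun v =>
    CharacterModule.eq_zero_of_character_apply fun c => ?_
  let g : V →ₗ[R] CharacterModule R := CharacterModule.homEquiv.symm
    (c.comp (TensorProduct.rid R V).toLinearMap.toAddMonoidHom)
  have hg : g v 1 = c v := congrArg c (TensorProduct.rid_tmul v 1 |>.trans (one_smul R v))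
  rw [← hg, h g]
  rfl

end Cogenerator

section Converse

variable {R : Type u} [CommRing R] {E : Type u} [AddCommGroup E] [Module R E]

theorem finitePresentation_of_homEvaluation_injective (hE : IsInjectiveCogenerator R E)
    {X : Type*} [AddCommGroup X] [Module R X] [Module.Finite R X]
    (h : ∀ J : Type u, Function.Injective (homEvaluation R X (J → E) E)) :
    Module.FinitePresentation R X := by
  classical
  have := hE.1
  obtain ⟨n, f, hf⟩ := Module.Finite.exists_fin' R X
  refine Module.finitePresentation_of_free_of_surjective f hf ?_
  let K := LinearMap.ker f
  -- `Φ` evaluates at all points of `K` at once. Being represented by a tensor, it only sees a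
  -- finitely generated `K₀ ≤ K`, so that every functional vanishing on `K₀` vanishes on `K`.
  obtain ⟨Φ, hΦ⟩ := exists_apply_single_comp_eq_apply (R := R) (E := E) K
  obtain ⟨w, hw⟩ := homEvaluation_bijective.2 (Φ ∘ₗ K.subtype.lcomp R (K → E))
  have hw_zero : f.rTensor _ w = 0 := by
    refine (injective_iff_map_eq_zero _).1 (h K) _ (LinearMap.ext fun g => ?_)
    have hgf : (g ∘ₗ f) ∘ₗ K.subtype = 0 := by
      rw [LinearMap.comp_assoc, LinearMap.comp_ker_subtype, LinearMap.comp_zero]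
    rw [homEvaluation_rTensor, hw, LinearMap.comp_apply, LinearMap.lcomp_apply', hgf, map_zero,
      LinearMap.zero_apply]
  obtain ⟨u, hu⟩ := (rTensor_exact _ (LinearMap.exact_subtype_ker_map f) hf w).1 hw_zero
  obtain ⟨K₀, hK₀, hle, v, rfl⟩ := Submodule.exists_fg_le_eq_rTensor_inclusion u
  suffices K ≤ K₀ from hle.antisymm this ▸ hK₀
  intro x hx
  refine hE.mem_of_forall_le_ker fun g hg => ?_
  let s := LinearMap.single R (fun _ : K => E) ⟨x, hx⟩
  have hgK₀ : (s ∘ₗ g) ∘ₗ K₀.subtype = 0 := by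
    rw [LinearMap.comp_assoc, LinearMap.le_ker_iff_comp_subtype_eq_zero.1 hg, LinearMap.comp_zero]
  calc g x = Φ (s ∘ₗ g ∘ₗ K.subtype) := (hΦ ⟨x, hx⟩ (g ∘ₗ K.subtype)).symm
    _ = homEvaluation R _ (K → E) E w (s ∘ₗ g) := (LinearMap.congr_fun hw (s ∘ₗ g)).symm
    _ = homEvaluation R _ (K → E) E v ((s ∘ₗ g) ∘ₗ K₀.subtype) := by
      rw [← hu, homEvaluation_rTensor, homEvaluation_rTensor]
      rfl
    _ = 0 := by rw [hgK₀, map_zero]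

end Converse

section NonnilCoherent

variable {R : Type u} [CommRing R]

theorem IsNonnilCoherent.isPhiFlat_doubleDual (hR : IsNonnilCoherent R) {E₁ E₂ M : Type u}
    [AddCommGroup E₁] [Module R E₁] [Module.Injective R E₁] [AddCommGroup E₂] [Module R E₂]
    [Module.Injective R E₂] [AddCommGroup M] [Module R M] (hM : IsPhiFlat R M) :
    IsPhiFlat R ((M →ₗ[R] E₁) →ₗ[R] E₂) :=
  isPhiFlat_iff_rTensor_injective.2 fun I hI hnil =>
    have := hR I hI hnil
    rTensor_doubleDual_injective (isPhiFlat_iff_rTensor_injective.1 hM I hI hnil)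

theorem isNonnilCoherent_of_isPhiFlat_dual_pi {E : Type u} [AddCommGroup E] [Module R E]
    (hE : IsInjectiveCogenerator R E) (h : ∀ J : Type u, IsPhiFlat R ((J → E) →ₗ[R] E)) :
    IsNonnilCoherent R := fun I hI hnil =>
  have : Module.Finite R I := Module.Finite.iff_fg.2 hI
  finitePresentation_of_homEvaluation_injective hE fun J =>
    homEvaluation_injective_of_rTensor_injective
      (isPhiFlat_iff_rTensor_injective.1 (h J) I hI hnil)

end NonnilCoherent

theorem nonnilCoherent_iff_double_dual_phiFlat_general (R : Type u) [CommRing R] :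
    IsNonnilCoherent R ↔
      ∀ (E₁ : Type u) [AddCommGroup E₁] [Module R E₁]
        (E₂ : Type u) [AddCommGroup E₂] [Module R E₂]
        (M : Type u) [AddCommGroup M] [Module R M],
        IsInjectiveCogenerator R E₁ → IsInjectiveCogenerator R E₂ → IsPhiFlat R M →
          IsPhiFlat R ((M →ₗ[R] E₁) →ₗ[R] E₂) := by
  refine ⟨fun hR E₁ _ _ E₂ _ _ M _ _ hE₁ hE₂ hM => ?_, fun h => ?_⟩
  · have := hE₁.1
    have := hE₂.1
    exact hR.isPhiFlat_doubleDual hM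
  · have hE := isInjectiveCogenerator_characterModule (R := R)
    refine isNonnilCoherent_of_isPhiFlat_dual_pi hE fun J => ?_
    have hfree : IsPhiFlat R (((J →₀ R) →ₗ[R] CharacterModule R) →ₗ[R] CharacterModule R) :=
      h _ _ _ hE hE .of_flat
    exact hfree.of_linearEquiv
      (LinearEquiv.congrLeft _ R (Finsupp.llift (CharacterModule R) R R J).symm)

/-- A φ-ring `R` is nonnil-coherent if and only if for all injective
cogenerators `E₁, E₂` and every φ-flat module `M`, the double dual
`Hom_R(Hom_R(M,E₁),E₂)` is φ-flat. -/
theorem nonnilCoherent_iff_double_dual_phiFlat (R : Type u) [CommRing R]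
    (hR : IsPhiRing R) :
    IsNonnilCoherent R ↔
      ∀ (E₁ : Type u) [AddCommGroup E₁] [Module R E₁]
        (E₂ : Type u) [AddCommGroup E₂] [Module R E₂]
        (M : Type u) [AddCommGroup M] [Module R M],
        IsInjectiveCogenerator R E₁ → IsInjectiveCogenerator R E₂ → IsPhiFlat R M →
          IsPhiFlat R ((M →ₗ[R] E₁) →ₗ[R] E₂) := by
  exact nonnilCoherent_iff_double_dual_phiFlat_general R
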